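/- Consider the group G₀ = (ℂ^6, ⊕) with (x₁,x₂,x₃,x₄,x₅,s) ⊕ (y₁,y₂,y₃,y₄,y₅,t) = (x₁+e^s y₁, x₂+e^{2s}y₂, x₃+e^{3s}y₃, x₄+e^{3s}y₄+e^{2s}x₁y₂−e^s x₂y₁, x₅+e^{4s}y₅, s+t). For g = (g₁,…,g₆) ∈ ℂ^6, the conjugation map C_g : ℂ^6 → ℂ^6, C_g(x) = g ⊕ x ⊕ g⁻¹, is holomorphic, and its derivative at 0 (the adjoint representation Ad(g)) is the ℂ-linear map sending e₁ ↦ e^{g₆}e₁ − 2g₂e^{g₆}e₄, e₂ ↦ e^{2g₆}e₂ + 2g₁e^{2g₆}e₄, e₃ ↦ e^{3g₆}e₃, e₄ ↦ e^{3g₆}e₄, e₅ ↦ e^{4g₆}e₅, and e₆ ↦ −g₁e₁ − 2g₂e₂ − 3g₃e₃ − (g₁g₂ + 3g₄)e₄ − 4g₅e₅ + e₆, where e₁,…,e₆ is the standard basis of ℂ^6. -/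

import Mathlib

/-- The group operation `⊕` on `ℂ^6`. -/
noncomputable def cSixMul (x y : Fin 6 → ℂ) : Fin 6 → ℂ :=
  ![x 0 + Complex.exp (x 5) * y 0,
    x 1 + Complex.exp (2 * x 5) * y 1,
    x 2 + Complex.exp (3 * x 5) * y 2,
    x 3 + Complex.exp (3 * x 5) * y 3
      + Complex.exp (2 * x 5) * x 0 * y 1 - Complex.exp (x 5) * x 1 * y 0,
    x 4 + Complex.exp (4 * x 5) * y 4,
    x 5 + y 5]

/-- The inverse `(−e^{−t}x₁, −e^{−2t}x₂, −e^{−3t}x₃, −e^{−3t}x₄, −e^{−4t}x₅, −t)`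
in `(ℂ^6, ⊕)`. -/
noncomputable def cSixInv (x : Fin 6 → ℂ) : Fin 6 → ℂ :=
  ![-(Complex.exp (-(x 5)) * x 0),
    -(Complex.exp (-(2 * x 5)) * x 1),
    -(Complex.exp (-(3 * x 5)) * x 2),
    -(Complex.exp (-(3 * x 5)) * x 3),
    -(Complex.exp (-(4 * x 5)) * x 4),
    -(x 5)]

/-- The conjugation map `C_g(x) = g ⊕ x ⊕ g⁻¹`. -/
noncomputable def conjMap (g : Fin 6 → ℂ) (x : Fin 6 → ℂ) : Fin 6 → ℂ :=
  cSixMul (cSixMul g x) (cSixInv g)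

/-- The standard basis vectors `e₁,…,e₆` of `ℂ^6` (indexed from `0`). -/
noncomputable def ee (i : Fin 6) : Fin 6 → ℂ := Pi.single i 1

theorem conj_eq (g x : Fin 6 → ℂ) : conjMap g x =
  ![g 0 + Complex.exp (g 5) * x 0 - Complex.exp (x 5) * g 0,
    g 1 + Complex.exp (2 * g 5) * x 1 - Complex.exp (2 * x 5) * g 1,
    g 2 + Complex.exp (3 * g 5) * x 2 - Complex.exp (3 * x 5) * g 2,
    g 3 + Complex.exp (3 * g 5) * x 3
      + Complex.exp (2 * g 5) * g 0 * x 1 - Complex.exp (g 5) * g 1 * x 0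
      - Complex.exp (3 * x 5) * g 3
      - Complex.exp (2 * x 5) * (g 0 + Complex.exp (g 5) * x 0) * g 1
      + Complex.exp (x 5) * (g 1 + Complex.exp (2 * g 5) * x 1) * g 0,
    g 4 + Complex.exp (4 * g 5) * x 4 - Complex.exp (4 * x 5) * g 4,
    x 5] := by
  have h1 : Complex.exp (g 5 + x 5) * Complex.exp (-(g 5)) = Complex.exp (x 5) := by
    rw [← Complex.exp_add]; congr 1; ring
  have h : ∀ k : ℂ, Complex.exp (k * (g 5 + x 5)) * Complex.exp (-(k * g 5))
      = Complex.exp (k * x 5) := by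
    intro k
    rw [← Complex.exp_add]; congr 1; ring
  funext i
  fin_cases i <;> simp [conjMap, cSixMul, cSixInv]
  · rw [← h1]; ring
  · rw [← h]; ring
  · rw [← h]; ring
  · rw [← h 3, ← h 2, ← h1]; ring
  · rw [← h]; ring

theorem conj_diff (g : Fin 6 → ℂ) : DifferentiableAt ℂ (conjMap g) 0 := by
  rw [show conjMap g = _ from funext (conj_eq g)]
  rw [differentiableAt_pi]
  intro i
  fin_cases i <;> simp <;> fun_prop

theorem conj_exp (k v : ℂ) :
    HasDerivAt (fun t : ℂ => Complex.exp (k * (t * v))) (k * v) 0 := by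
  have h := ((((hasDerivAt_id (0 : ℂ)).mul_const v).const_mul k)).cexp
  simpa using h

theorem conj_fderiv (g v : Fin 6 → ℂ) : fderiv ℂ (conjMap g) 0 v =
  ![Complex.exp (g 5) * v 0 - v 5 * g 0,
    Complex.exp (2 * g 5) * v 1 - 2 * v 5 * g 1,
    Complex.exp (3 * g 5) * v 2 - 3 * v 5 * g 2,
    Complex.exp (3 * g 5) * v 3
      + 2 * Complex.exp (2 * g 5) * g 0 * v 1 - 2 * Complex.exp (g 5) * g 1 * v 0
      - 3 * v 5 * g 3 - v 5 * g 0 * g 1,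
    Complex.exp (4 * g 5) * v 4 - 4 * v 5 * g 4,
    v 5] := by
  have hl : HasDerivAt (fun t : ℂ => t • v) v 0 := by
    simpa using (hasDerivAt_id (0 : ℂ)).smul_const v
  have hd : HasFDerivAt (conjMap g) (fderiv ℂ (conjMap g) 0) ((0 : ℂ) • v) := by
    rw [zero_smul]; exact (conj_diff g).hasFDerivAt
  have hc := hd.comp_hasDerivAt (0 : ℂ) hl
  refine hc.unique ?_
  rw [hasDerivAt_pi]
  have lin : ∀ i, HasDerivAt (fun t : ℂ => t * v i) (v i) 0 := fun i => by
    simpa using (hasDerivAt_id (0 : ℂ)).mul_const (v i)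
  have e1 : HasDerivAt (fun t : ℂ => Complex.exp (t * v 5)) (v 5) 0 := by
    simpa using conj_exp 1 (v 5)
  have gen : ∀ (k a c : ℂ) (i : Fin 6), HasDerivAt
      (fun t : ℂ => a + c * (t * v i) - Complex.exp (k * (t * v 5)) * a)
      (c * v i - k * v 5 * a) 0 := fun k a c i =>
    (((lin i).const_mul c).const_add a).sub ((conj_exp k (v 5)).mul_const a)
  intro i
  fin_cases i <;> simp [Function.comp_def, conj_eq]
  · simpa using gen 1 (g 0) (Complex.exp (g 5)) 0
  · exact gen 2 (g 1) _ 1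
  · exact gen 3 (g 2) _ 2
  · have A := ((((((lin 3).const_mul (Complex.exp (3 * g 5))).const_add (g 3)).add
      ((lin 1).const_mul (Complex.exp (2 * g 5) * g 0))).sub
      ((lin 0).const_mul (Complex.exp (g 5) * g 1))).sub
      ((conj_exp 3 (v 5)).mul_const (g 3)))
    have B := ((conj_exp 2 (v 5)).mul
      (((lin 0).const_mul (Complex.exp (g 5))).const_add (g 0))).mul_const (g 1)
    have C := (e1.mul
      (((lin 1).const_mul (Complex.exp (2 * g 5))).const_add (g 1))).mul_const (g 0)
    refine ((A.sub B).add C).congr_deriv ?_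
    simp
    ring
  · exact gen 4 (g 4) _ 4
  · exact lin 5

/-- The conjugation map `C_g` of `G₀ = (ℂ^6, ⊕)` is holomorphic, and its
derivative at `0` (the adjoint representation `Ad(g)`) acts on the standard
basis by the explicit formulas of the worked example. -/
theorem statement17 (g : Fin 6 → ℂ) :
    DifferentiableAt ℂ (conjMap g) 0 ∧
    fderiv ℂ (conjMap g) 0 (ee 0)
      = Complex.exp (g 5) • ee 0 - (2 * g 1 * Complex.exp (g 5)) • ee 3 ∧
    fderiv ℂ (conjMap g) 0 (ee 1)
      = Complex.exp (2 * g 5) • ee 1 + (2 * g 0 * Complex.exp (2 * g 5)) • ee 3 ∧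
    fderiv ℂ (conjMap g) 0 (ee 2) = Complex.exp (3 * g 5) • ee 2 ∧
    fderiv ℂ (conjMap g) 0 (ee 3) = Complex.exp (3 * g 5) • ee 3 ∧
    fderiv ℂ (conjMap g) 0 (ee 4) = Complex.exp (4 * g 5) • ee 4 ∧
    fderiv ℂ (conjMap g) 0 (ee 5)
      = -(g 0) • ee 0 - (2 * g 1) • ee 1 - (3 * g 2) • ee 2
          - (g 0 * g 1 + 3 * g 3) • ee 3 - (4 * g 4) • ee 4 + ee 5 := by
  refine ⟨conj_diff g, ?_, ?_, ?_, ?_, ?_, ?_⟩ <;> rw [conj_fderiv] <;> funext i <;>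
    fin_cases i <;> simp [ee, Pi.single_apply] <;> ring
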